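/- Let A = (Q, Σ, Δ, Q₀, F) be a nondeterministic Büchi automaton with Q₀ ≠ ∅, and let B be any transition-based deterministic parity automaton obtained from the Muller-Schupp construction for A. Then L(B) = L(A), i.e., B accepts exactly the infinite words accepted by A. -/

import Mathlib

/-! Core definitions: NBA, TDPA, ranked slices, and the unified
determinization construction. -/

universe u v

/-- A nondeterministic Büchi automaton over state type `Q` and alphabet `Alp`. -/
structure NBA (Q : Type u) (Alp : Type v) where
  delta : Q → Alp → Set Q
  Q0 : Set Q
  F : Set Q

namespace NBA

variable {Q : Type u} {Alp : Type v}

/-- `Δ(X, x)`: successors of a set of states. -/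
def nextSet (A : NBA Q Alp) (X : Set Q) (x : Alp) : Set Q := ⋃ q ∈ X, A.delta q x

/-- A run of the NBA on the word `w`. -/
def IsRun (A : NBA Q Alp) (w : ℕ → Alp) (q : ℕ → Q) : Prop :=
  q 0 ∈ A.Q0 ∧ ∀ i, q (i + 1) ∈ A.delta (q i) (w i)

/-- Acceptance: some run visits `F` infinitely often. -/
def Accepts (A : NBA Q Alp) (w : ℕ → Alp) : Prop :=
  ∃ q, A.IsRun w q ∧ ∀ N, ∃ i, N ≤ i ∧ q i ∈ A.F

end NBA

/-- A transition-based deterministic parity automaton. -/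
structure TDPA (P : Type u) (Alp : Type v) where
  delta : P → Alp → P
  p0 : P
  c : P → Alp → ℕ

namespace TDPA

variable {P : Type u} {Alp : Type v}

/-- The unique run of the TDPA on `w`. -/
def run (B : TDPA P Alp) (w : ℕ → Alp) : ℕ → P
  | 0 => B.p0
  | i + 1 => B.delta (B.run w i) (w i)

/-- Acceptance: the minimum priority occurring infinitely often on the run is even. -/
def Accepts (B : TDPA P Alp) (w : ℕ → Alp) : Prop :=
  ∃ m, (∀ N, ∃ i, N ≤ i ∧ B.c (B.run w i) (w i) = m) ∧
    (∀ m', (∀ N, ∃ i, N ≤ i ∧ B.c (B.run w i) (w i) = m') → m ≤ m') ∧ Even m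

/-- Reachability from the initial state. -/
def Reachable (B : TDPA P Alp) (p : P) : Prop :=
  ∃ l : List Alp, l.foldl B.delta B.p0 = p

end TDPA

/-- A (ranked) slice: a tuple `S 1, …, S n` of subsets of `Q` together with a
ranking function `rk`.  Only the values on `{1, …, n}` are relevant. -/
structure Slice (Q : Type u) where
  n : ℕ
  S : ℕ → Set Q
  rk : ℕ → ℕ

namespace Slice

variable {Q : Type u}

/-- A valid ranked slice: the sets are nonempty and pairwise disjoint, the ranking is a
bijection of `{1,…,n}` and the last set has rank `1`. -/
def Valid (s : Slice Q) : Prop :=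
  (∀ i ∈ Set.Icc 1 s.n, (s.S i).Nonempty) ∧
  (∀ i ∈ Set.Icc 1 s.n, ∀ j ∈ Set.Icc 1 s.n, i ≠ j → Disjoint (s.S i) (s.S j)) ∧
  Set.BijOn s.rk (Set.Icc 1 s.n) (Set.Icc 1 s.n) ∧
  (1 ≤ s.n → s.rk s.n = 1)

/-- `Q_t`: union of all sets of the slice. -/
def states (s : Slice Q) : Set Q := ⋃ i ∈ Set.Icc 1 s.n, s.S i

/-- `idx q`: the (unique) index of the set containing `q`. -/
noncomputable def idx (s : Slice Q) (q : Q) : ℕ :=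
  sInf {i | 1 ≤ i ∧ i ≤ s.n ∧ q ∈ s.S i}

end Slice

variable {Q : Type u} {Alp : Type v}

/-- `Δ_t(q, x)`: successors of `q` not reachable from a set strictly to the left. -/
noncomputable def dT (A : NBA Q Alp) (s : Slice Q) (q : Q) (x : Alp) : Set Q :=
  A.delta q x \ A.nextSet (⋃ i ∈ Set.Ico 1 (s.idx q), s.S i) x

/-- `Δ_t(X, x)` for a set `X`. -/
noncomputable def dTs (A : NBA Q Alp) (s : Slice Q) (X : Set Q) (x : Alp) : Set Q :=
  ⋃ q ∈ X, dT A s q x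

/-- The sets `Ŝ_j` of the step stage: odd positions are left (accepting) children, even
positions right (non-accepting) children. -/
noncomputable def hatS (A : NBA Q Alp) (s : Slice Q) (x : Alp) (j : ℕ) : Set Q :=
  if j % 2 = 1 then dTs A s (s.S ((j + 1) / 2)) x ∩ A.F
  else dTs A s (s.S (j / 2)) x \ A.F

/-- The ranking `α̂` of the step stage. -/
def hatRk (s : Slice Q) (j : ℕ) : ℕ :=
  if j % 2 = 1 then s.n + 1 else s.rk (j / 2)

/-- The prune stage: `xs 1 < … < xs nt` enumerates the indices of the nonempty sets
among `Ŝ_1, …, Ŝ_{2n}`, and `xs (nt+1) = 2n + 1`. -/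
def IsPrune (A : NBA Q Alp) (s : Slice Q) (x : Alp) (nt : ℕ) (xs : ℕ → ℕ) : Prop :=
  StrictMonoOn xs (Set.Icc 1 nt) ∧
  (∀ i ∈ Set.Icc 1 nt, xs i ∈ Set.Icc 1 (2 * s.n) ∧ (hatS A s x (xs i)).Nonempty) ∧
  (∀ j ∈ Set.Icc 1 (2 * s.n), (hatS A s x j).Nonempty → ∃ i ∈ Set.Icc 1 nt, xs i = j) ∧
  xs (nt + 1) = 2 * s.n + 1

/-- The ranking `α̃` after prune: `α̃ i = min {α̂ j | xs i ≤ j < xs (i+1)}`. -/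
noncomputable def tildeRk (s : Slice Q) (xs : ℕ → ℕ) (i : ℕ) : ℕ :=
  sInf (hatRk s '' {j | xs i ≤ j ∧ j < xs (i + 1)})

/-- The green ranks: ranks in the image of `α̃` that mark an empty set after step. -/
def greenSet (A : NBA Q Alp) (s : Slice Q) (x : Alp) (nt : ℕ) (xs : ℕ → ℕ) : Set ℕ :=
  {r | (∃ i ∈ Set.Icc 1 nt, tildeRk s xs i = r) ∧
    ∃ j ∈ Set.Icc 1 (2 * s.n), hatS A s x j = ∅ ∧ hatRk s j = r}

/-- The red ranks: ranks in the image of `α̂` but not of `α̃`. -/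
def redSet (s : Slice Q) (nt : ℕ) (xs : ℕ → ℕ) : Set ℕ :=
  {r | (∃ j ∈ Set.Icc 1 (2 * s.n), hatRk s j = r) ∧ ¬ ∃ i ∈ Set.Icc 1 nt, tildeRk s xs i = r}

open Classical in
/-- The dominating rank: the minimum of the active ranks `G ∪ R`, or `|Q| + 1` if there
is no active rank. -/
noncomputable def domRank (G R : Set ℕ) (card : ℕ) : ℕ :=
  if (G ∪ R).Nonempty then sInf (G ∪ R) else card + 1

/-- A partition of `{1,…,nt}` into consecutive intervals, described by its boundaries:
the `j`-th interval is `Icc (b (j-1) + 1) (b j)`. -/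
def IsIntervalPartition (nt n' : ℕ) (b : ℕ → ℕ) : Prop :=
  b 0 = 0 ∧ b n' = nt ∧ StrictMonoOn b (Set.Icc 0 n')

/-- The merge constraints: intervals containing a rank `< k` are singletons, and an index
carrying rank `k` is the maximum of its interval. -/
def MergeConstraints (n' : ℕ) (b : ℕ → ℕ) (aT : ℕ → ℕ) (k : ℕ) : Prop :=
  ∀ j ∈ Set.Icc 1 n', ∀ l ∈ Set.Icc (b (j - 1) + 1) (b j),
    (aT l < k → b j = b (j - 1) + 1) ∧ (aT l = k → l = b j)

/-- A full transition of the (unified) construction, via prune data `(nt, xs)` and the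
merge partition `(n', b)`. -/
noncomputable def TransVia [Fintype Q] (A : NBA Q Alp) (s : Slice Q) (x : Alp)
    (s' : Slice Q) (pr : ℕ) (nt : ℕ) (xs : ℕ → ℕ) (n' : ℕ) (b : ℕ → ℕ) : Prop :=
  IsPrune A s x nt xs ∧
  IsIntervalPartition nt n' b ∧
  MergeConstraints n' b (tildeRk s xs)
    (domRank (greenSet A s x nt xs) (redSet s nt xs) (Fintype.card Q)) ∧
  ((domRank (greenSet A s x nt xs) (redSet s nt xs) (Fintype.card Q) ∈ greenSet A s x nt xs ∧
      pr = 2 * domRank (greenSet A s x nt xs) (redSet s nt xs) (Fintype.card Q)) ∨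
   (domRank (greenSet A s x nt xs) (redSet s nt xs) (Fintype.card Q) ∉ greenSet A s x nt xs ∧
      pr = 2 * domRank (greenSet A s x nt xs) (redSet s nt xs) (Fintype.card Q) - 1)) ∧
  s'.n = n' ∧
  (∀ i ∈ Set.Icc 1 n', s'.S i = ⋃ j ∈ Set.Icc (b (i - 1) + 1) (b i), hatS A s x (xs j)) ∧
  s'.Valid ∧
  (∀ i ∈ Set.Icc 1 n', ∀ j ∈ Set.Icc 1 n',
    sInf (tildeRk s xs '' Set.Icc (b (i - 1) + 1) (b i)) <
      sInf (tildeRk s xs '' Set.Icc (b (j - 1) + 1) (b j)) → s'.rk i < s'.rk j)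

/-- A transition of the unified construction (any valid merge partition). -/
noncomputable def UnifiedTrans [Fintype Q] (A : NBA Q Alp) (s : Slice Q) (x : Alp)
    (s' : Slice Q) (pr : ℕ) : Prop :=
  ∃ nt xs n' b, TransVia A s x s' pr nt xs n' b

/-- A transition of the Muller-Schupp construction (merge partition into singletons). -/
noncomputable def MSTrans [Fintype Q] (A : NBA Q Alp) (s : Slice Q) (x : Alp)
    (s' : Slice Q) (pr : ℕ) : Prop :=
  ∃ nt xs, TransVia A s x s' pr nt xs nt id

/-- `B` is obtained from the unified construction for `A`. -/
noncomputable def ObtainedUnified [Fintype Q] (A : NBA Q Alp) (B : TDPA (Slice Q) Alp) : Prop :=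
  B.p0.n = 1 ∧ B.p0.S 1 = A.Q0 ∧ B.p0.rk 1 = 1 ∧
  ∀ p, B.Reachable p → ∀ x, UnifiedTrans A p x (B.delta p x) (B.c p x)

/-- `B` is obtained from the Muller-Schupp construction for `A`. -/
noncomputable def ObtainedMS [Fintype Q] (A : NBA Q Alp) (B : TDPA (Slice Q) Alp) : Prop :=
  B.p0.n = 1 ∧ B.p0.S 1 = A.Q0 ∧ B.p0.rk 1 = 1 ∧
  ∀ p, B.Reachable p → ∀ x, MSTrans A p x (B.delta p x) (B.c p x)

/-!
The sets of the successive slices form a tree of reachable states, and prune followed by merge cuts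
the positions of the step stage into consecutive blocks. Each rank below the dominating one keeps a
block to itself, so descendants of states left of its host stay left of it, and similarly on the
right.

If the least recurring priority is `2 * k`, then rank `k` eventually persists and recurs among the
green ranks. The tree paths to the successive hosts of `k` have a limit path by König's lemma. If
the limit path left `F` for good, it would later branch off from a path ending in the host of `k`;
from then on it would lie in that host itself, so that `k` could never be green again.

If the least recurring priority is `2 * k - 1`, follow an accepting run. A visit to `F` moves it to
the left of a host it shares, so it ends up strictly on one side of the host of each rank below `k`.
Between the run and the next such host to its right all ranks are at least `k`; their minimum never
rises and drops at every red `k`, so `k` is red only finitely often, a contradiction.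
-/

section

open Set Filter

/-! ### Sequences -/

theorem exists_frequently_eq_and_eventually_ge {c : ℕ → ℕ} {K : ℕ}
    (hc : ∃ᶠ t in atTop, c t ≤ K) :
    ∃ m, (∃ᶠ t in atTop, c t = m) ∧ ∀ᶠ t in atTop, m ≤ c t := by
  classical
  have hex : ∃ m, ∃ᶠ t in atTop, c t ≤ m := ⟨K, hc⟩
  have hge : ∀ᶠ t in atTop, Nat.find hex ≤ c t := by
    rcases hm : Nat.find hex with _ | m
    · exact .of_forall fun t => Nat.zero_le _
    · have hmin : ¬ ∃ᶠ t in atTop, c t ≤ m := Nat.find_min hex (by omega)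
      simpa only [not_frequently, not_le, Nat.lt_iff_add_one_le] using hmin
  exact ⟨_, ((Nat.find_spec hex).and_eventually hge).mono fun t ht => le_antisymm ht.1 ht.2, hge⟩

theorem eventually_of_frequently_of_step {P : ℕ → Prop} (hP : ∃ᶠ t in atTop, P t)
    (hstep : ∀ᶠ t in atTop, P t → P (t + 1)) : ∀ᶠ t in atTop, P t := by
  obtain ⟨T, hT⟩ := eventually_atTop.1 hstep
  obtain ⟨t₀, ht₀, hPt₀⟩ := frequently_atTop.1 hP T
  refine eventually_atTop.2 ⟨t₀, fun t ht => ?_⟩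
  induction t, ht using Nat.le_induction with
  | base => exact hPt₀
  | succ t ht ih => exact hT t (ht₀.trans ht) ih

theorem eventually_not_of_descent {α : Type*} {W : ℕ → Set α} {f : ℕ → α → ℕ} {P : ℕ → Prop}
    (hstep : ∀ᶠ t in atTop, ∀ i ∈ W t, ∃ i' ∈ W (t + 1),
      f (t + 1) i' ≤ f t i ∧ (P t → f (t + 1) i' < f t i))
    (hW : ∃ᶠ t in atTop, (W t).Nonempty) : ∀ᶠ t in atTop, ¬ P t := by
  by_contra hP
  rw [not_eventually] at hP
  simp only [not_not] at hP
  obtain ⟨T, hT⟩ := eventually_atTop.1 hstep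
  have hempty : ∀ c, ∀ t ≥ T, ∀ i ∈ W t, f t i ≠ c := fun c => by
    induction c using Nat.strong_induction_on with | _ c ih
    rintro t ht i hi rfl
    obtain ⟨t', htt', hPt'⟩ := frequently_atTop.1 hP t
    obtain ⟨j, hj, hji⟩ : ∃ j ∈ W t', f t' j ≤ f t i := by
      clear hPt'
      induction t', htt' using Nat.le_induction with
      | base => exact ⟨i, hi, le_rfl⟩
      | succ t' htt' ih' =>
        obtain ⟨j, hj, hji⟩ := ih'
        obtain ⟨j', hj', hle, -⟩ := hT t' (ht.trans htt') j hj
        exact ⟨j', hj', hle.trans hji⟩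
    obtain ⟨j', hj', -, hlt⟩ := hT t' (ht.trans htt') j hj
    exact ih _ ((hlt hPt').trans_le hji) (t' + 1) (by omega) j' hj' rfl
  obtain ⟨t, ht, i, hi⟩ := frequently_atTop.1 hW T
  exact hempty _ t ht i hi rfl

theorem exists_backward_chain {α : Type*} {E : ℕ → α → α → Prop} {S : ℕ → Set α}
    (hE : ∀ t, ∀ b ∈ S (t + 1), ∃ a ∈ S t, E t a b) (T : ℕ) :
    ∀ b ∈ S T, ∃ p : ℕ → α, p T = b ∧ ∀ t < T, E t (p t) (p (t + 1)) := by
  induction T with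
  | zero => exact fun b _ => ⟨fun _ => b, rfl, by simp⟩
  | succ T ih =>
    intro b hb
    obtain ⟨a, ha, hab⟩ := hE T b hb
    obtain ⟨p, rfl, hp⟩ := ih a ha
    refine ⟨Function.update p (T + 1) b, Function.update_self .., fun t ht => ?_⟩
    rw [Function.update_of_ne (by omega)]
    rcases Nat.lt_succ_iff_lt_or_eq.1 ht with ht | rfl
    · rw [Function.update_of_ne (by omega)]
      exact hp t ht
    · rwa [Function.update_self]

/- König's lemma; the limit is taken pointwise along a nonprincipal ultrafilter, which also makes
every value of the limit recur in infinitely many of the given chains. -/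
theorem exists_limit_chain {α : Type*} [Finite α] {E : ℕ → α → α → Prop} {p : ℕ → ℕ → α}
    (hp : ∀ T, ∀ t < T, E t (p T t) (p T (t + 1))) :
    ∃ ρ : ℕ → α, (∀ t, E t (ρ t) (ρ (t + 1))) ∧ ∀ N, ∃ᶠ T in atTop, p T N = ρ N := by
  have hlim : ∀ t, ∃ a, ∀ᶠ T in (hyperfilter ℕ : Filter ℕ), p T t = a := fun t =>
    Ultrafilter.eventually_exists_iff.1 (.of_forall fun T => ⟨p T t, rfl⟩)
  choose ρ hρ using hlim
  have hle : (hyperfilter ℕ : Filter ℕ) ≤ atTop := Nat.hyperfilter_le_atTop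
  refine ⟨ρ, fun t => ?_, fun N => (hρ N).frequently.filter_mono hle⟩
  obtain ⟨T, ht, ht', hT⟩ :=
    ((hρ t).and ((hρ (t + 1)).and (hle (eventually_gt_atTop t)))).exists
  exact ht ▸ ht' ▸ hp T t hT

/-- `g` normalizes the rank labels `f 1, …, f n` to a bijection onto `{1, …, n}`: it respects
every strict comparison of labels and breaks ties arbitrarily. -/
structure IsNormalization (n : ℕ) (f g : ℕ → ℕ) : Prop where
  bijOn : BijOn g (Icc 1 n) (Icc 1 n)
  lt_of_lt : ∀ i ∈ Icc 1 n, ∀ j ∈ Icc 1 n, f i < f j → g i < g j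

namespace IsNormalization

variable {n N i : ℕ} {f g : ℕ → ℕ}

theorem exists_pred (h : IsNormalization n f g) (hi : i ∈ Icc 1 n) (hgi : 1 < g i) :
    ∃ j ∈ Icc 1 n, g i = g j + 1 ∧ f j ≤ f i := by
  have hle := (h.bijOn.mapsTo hi).2
  obtain ⟨j, hj, hgj⟩ := h.bijOn.surjOn (show g i - 1 ∈ Icc 1 n from ⟨by omega, by omega⟩)
  refine ⟨j, hj, by omega, not_lt.1 fun hlt => ?_⟩
  have := h.lt_of_lt i hi j hj hlt
  omega

theorem le_of_injective (h : IsNormalization n f g) (hpos : ∀ i ∈ Icc 1 n, 1 ≤ f i)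
    (hinj : ∀ i ∈ Icc 1 n, ∀ j ∈ Icc 1 n, f i ≤ N → f i = f j → i = j)
    (hi : i ∈ Icc 1 n) (hN : f i ≤ N) : g i ≤ f i := by
  induction hm : g i using Nat.strong_induction_on generalizing i with | _ m ih
  have hfi := hpos i hi
  by_contra! hlt
  obtain ⟨j, hj, hgj, hfj⟩ := h.exists_pred hi (by omega)
  have hne : f i ≠ f j := fun he => by
    obtain rfl := hinj i hi j hj hN he
    omega
  have := ih (g j) (by omega) hj (by omega) rfl
  omega

theorem lt_of_forall_ne (h : IsNormalization n f g) (hpos : ∀ i ∈ Icc 1 n, 1 ≤ f i)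
    (hinj : ∀ i ∈ Icc 1 n, ∀ j ∈ Icc 1 n, f i ≤ N → f i = f j → i = j) {r : ℕ}
    (hr : 1 ≤ r) (hrf : ∀ j ∈ Icc 1 n, f j ≠ r) (hi : i ∈ Icc 1 n) (hN : f i ≤ N)
    (hri : r < f i) : g i < f i := by
  induction hm : g i using Nat.strong_induction_on generalizing i with | _ m ih
  by_contra! hle
  obtain ⟨j, hj, hgj, hfj⟩ := h.exists_pred hi (by omega)
  have hne : f i ≠ f j := fun he => by
    obtain rfl := hinj i hi j hj hN he
    omega
  rcases (hrf j hj).lt_or_gt with hlt | hgt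
  · have := h.le_of_injective hpos hinj hj (by omega)
    omega
  · have := ih (g j) (by omega) hj (by omega) hgt rfl
    omega

theorem le_apply (h : IsNormalization n f g)
    (hsurj : ∀ r ∈ Icc 1 N, ∃ j ∈ Icc 1 n, f j = r) (hi : i ∈ Icc 1 n) (hN : f i ≤ N) :
    f i ≤ g i := by
  induction hm : f i generalizing i with
  | zero => exact Nat.zero_le _
  | succ m ih =>
    rcases m.eq_zero_or_pos with rfl | hpos
    · exact (h.bijOn.mapsTo hi).1
    · obtain ⟨j, hj, hfj⟩ := hsurj m ⟨hpos, by omega⟩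
      have := ih hj (by omega) hfj
      have := h.lt_of_lt j hj i hi (by omega)
      omega

end IsNormalization

/-! ### Blocks -/

/-- The position `y` lies in the `j`-th of the `n` consecutive blocks
`{z j, …, z (j + 1) - 1}`, `1 ≤ j ≤ n`, of natural numbers. -/
def InBlock (z : ℕ → ℕ) (n y j : ℕ) : Prop := j ∈ Icc 1 n ∧ y ∈ Ico (z j) (z (j + 1))

namespace InBlock

variable {z : ℕ → ℕ} {n y y' j j' : ℕ}

theorem le_of_le (hz : MonotoneOn z (Icc 1 (n + 1))) (h : InBlock z n y j)
    (h' : InBlock z n y' j') (hy : y ≤ y') : j ≤ j' := by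
  obtain ⟨⟨h1, hn⟩, hy1, -⟩ := h
  obtain ⟨⟨h1', hn'⟩, -, hy2⟩ := h'
  by_contra! hlt
  have := hz (a := j' + 1) (b := j) ⟨by omega, by omega⟩ ⟨h1, by omega⟩ hlt
  omega

theorem unique (hz : MonotoneOn z (Icc 1 (n + 1))) (h : InBlock z n y j)
    (h' : InBlock z n y j') : j = j' :=
  le_antisymm (h.le_of_le hz h' le_rfl) (h'.le_of_le hz h le_rfl)

end InBlock

theorem inBlock_start {z : ℕ → ℕ} {n j : ℕ} (hz : StrictMonoOn z (Icc 1 (n + 1)))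
    (hj : j ∈ Icc 1 n) : InBlock z n (z j) j := by
  obtain ⟨h1, hn⟩ := hj
  exact ⟨⟨h1, hn⟩, le_rfl, hz ⟨h1, by omega⟩ ⟨by omega, by omega⟩ j.lt_succ_self⟩

theorem exists_inBlock {z : ℕ → ℕ} {n y i : ℕ} (hi : i ∈ Icc 1 n)
    (hy : y ∈ Ico (z i) (z (n + 1))) : ∃ j, InBlock z n y j := by
  have hspec : z (Nat.findGreatest (z · ≤ y) n) ≤ y :=
    Nat.findGreatest_spec (P := (z · ≤ y)) hi.2 hy.1
  have hle : i ≤ Nat.findGreatest (z · ≤ y) n := Nat.le_findGreatest hi.2 hy.1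
  refine ⟨Nat.findGreatest (z · ≤ y) n, ⟨hi.1.trans hle, Nat.findGreatest_le n⟩, hspec, ?_⟩
  rcases (Nat.findGreatest_le n (P := (z · ≤ y))).lt_or_eq with hlt | heq
  · exact not_le.1 (Nat.findGreatest_is_greatest (P := (z · ≤ y)) (Nat.lt_succ_self _) hlt)
  · rw [heq]
    exact hy.2

theorem inBlock_comp_iff {x β : ℕ → ℕ} {m n y j : ℕ} (hx : StrictMonoOn x (Icc 1 (m + 1)))
    (hβ : MapsTo β (Icc 1 (n + 1)) (Icc 1 (m + 1))) :
    InBlock (x ∘ β) n y j ↔ ∃ l, InBlock β n l j ∧ InBlock x m y l := by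
  constructor
  · rintro ⟨hj, hy⟩
    simp only [Function.comp_apply, mem_Ico] at hy
    have hj₁ : β j ∈ Icc 1 (m + 1) := hβ ⟨hj.1, hj.2.trans n.le_succ⟩
    have hj₂ : β (j + 1) ∈ Icc 1 (m + 1) := hβ ⟨by omega, Nat.succ_le_succ hj.2⟩
    have hlt : β j < β (j + 1) := (hx.lt_iff_lt hj₁ hj₂).1 (by omega)
    have hlast := hx.monotoneOn hj₂ (right_mem_Icc.2 (Nat.le_add_left 1 m)) hj₂.2
    have hjm : β j ∈ Icc 1 m := ⟨hj₁.1, by have := hj₂.2; omega⟩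
    obtain ⟨l, hl⟩ := exists_inBlock hjm (z := x) (y := y) ⟨hy.1, by omega⟩
    have hle := (inBlock_start hx hjm).le_of_le hx.monotoneOn hl hy.1
    refine ⟨l, ⟨hj, hle, ?_⟩, hl⟩
    exact (hx.lt_iff_lt ⟨hl.1.1, hl.1.2.trans m.le_succ⟩ hj₂).1 (hl.2.1.trans_lt hy.2)
  · rintro ⟨l, ⟨hj, hjl, hlj⟩, ⟨hl1, hlm⟩, hy⟩
    have hj₁ : β j ∈ Icc 1 (m + 1) := hβ ⟨hj.1, hj.2.trans n.le_succ⟩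
    have hj₂ : β (j + 1) ∈ Icc 1 (m + 1) := hβ ⟨by omega, Nat.succ_le_succ hj.2⟩
    exact ⟨hj, (hx.monotoneOn hj₁ ⟨hl1, by omega⟩ hjl).trans hy.1,
      hy.2.trans_le (hx.monotoneOn (a := l + 1) ⟨by omega, by omega⟩ hj₂ hlj)⟩

/-! ### Slices and the step stage -/

namespace Slice

variable {s : Slice Q} {q : Q} {i r : ℕ}

theorem idx_eq (hv : s.Valid) (hi : i ∈ Icc 1 s.n) (hq : q ∈ s.S i) : s.idx q = i := by
  have hset : {j | 1 ≤ j ∧ j ≤ s.n ∧ q ∈ s.S j} = {i} := by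
    refine Subset.antisymm (fun j hj => ?_) (singleton_subset_iff.2 ⟨hi.1, hi.2, hq⟩)
    by_contra hne
    exact disjoint_left.1 (hv.2.1 j ⟨hj.1, hj.2.1⟩ i hi hne) hj.2.2 hq
  rw [idx, hset, csInf_singleton]

theorem idx_mem (hq : q ∈ s.states) : s.idx q ∈ Icc 1 s.n ∧ q ∈ s.S (s.idx q) := by
  obtain ⟨i, hi, hqi⟩ := mem_iUnion₂.1 hq
  have h : s.idx q ∈ {i | 1 ≤ i ∧ i ≤ s.n ∧ q ∈ s.S i} := Nat.sInf_mem ⟨i, hi.1, hi.2, hqi⟩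
  exact ⟨⟨h.1, h.2.1⟩, h.2.2⟩

theorem n_le_card [Fintype Q] (hv : s.Valid) : s.n ≤ Fintype.card Q := by
  have hsurj : SurjOn s.idx (Finset.univ : Finset Q) (Finset.Icc 1 s.n) := fun i hi => by
    have hi := Finset.mem_Icc.1 hi
    obtain ⟨q, hq⟩ := hv.1 i hi
    exact ⟨q, Finset.mem_coe.2 (Finset.mem_univ q), idx_eq hv hi hq⟩
  simpa using Finset.card_le_card_of_surjOn s.idx hsurj

theorem valid_of_n_eq_one (hn : s.n = 1) (hS : (s.S 1).Nonempty) (hrk : s.rk 1 = 1) :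
    s.Valid := by
  simp only [Valid, hn, Icc_self, mem_singleton_iff]
  refine ⟨fun i hi => hi ▸ hS, fun i hi j hj hij => absurd (hi.trans hj.symm) hij, ?_,
    fun _ => hrk⟩
  exact ⟨mapsTo_singleton.2 hrk, injOn_singleton _ _, surjOn_singleton.2 ⟨1, rfl, hrk⟩⟩

/-- The index carrying rank `r`, i.e. `α⁻¹(r)`; it is meaningful only for `r ∈ {1, …, n}`. -/
noncomputable def host (s : Slice Q) (r : ℕ) : ℕ := Function.invFunOn s.rk (Icc 1 s.n) r

theorem rk_mem (hv : s.Valid) (hi : i ∈ Icc 1 s.n) : s.rk i ∈ Icc 1 s.n := hv.2.2.1.mapsTo hi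

theorem host_mem (hv : s.Valid) (hr : r ∈ Icc 1 s.n) : s.host r ∈ Icc 1 s.n :=
  hv.2.2.1.surjOn.mapsTo_invFunOn hr

theorem rk_host (hv : s.Valid) (hr : r ∈ Icc 1 s.n) : s.rk (s.host r) = r :=
  hv.2.2.1.surjOn.rightInvOn_invFunOn hr

theorem host_rk (hv : s.Valid) (hi : i ∈ Icc 1 s.n) : s.host (s.rk i) = i :=
  hv.2.2.1.injOn.leftInvOn_invFunOn hi

theorem hatRk_two_mul (s : Slice Q) (i : ℕ) : hatRk s (2 * i) = s.rk i := by
  rw [hatRk, if_neg (by omega), Nat.mul_div_cancel_left _ two_pos]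

theorem hatRk_two_mul_host (hv : s.Valid) (hr : r ∈ Icc 1 s.n) :
    hatRk s (2 * s.host r) = r := by
  rw [hatRk_two_mul, rk_host hv hr]

theorem two_mul_host_mem (hv : s.Valid) (hr : r ∈ Icc 1 s.n) :
    2 * s.host r ∈ Icc 1 (2 * s.n) := by
  have := host_mem hv hr
  exact ⟨by have := this.1; omega, by have := this.2; omega⟩

theorem hatRk_mem {y : ℕ} (hv : s.Valid) (hy : y ∈ Icc 1 (2 * s.n)) :
    hatRk s y ∈ Icc 1 (s.n + 1) := by
  obtain ⟨hy1, hyn⟩ := hy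
  rw [hatRk]
  split_ifs
  · exact ⟨by omega, le_rfl⟩
  · exact Icc_subset_Icc_right s.n.le_succ (rk_mem hv ⟨by omega, by omega⟩)

theorem eq_two_mul_host {y : ℕ} (hv : s.Valid) (hy : y ∈ Icc 1 (2 * s.n))
    (hr : hatRk s y ≤ s.n) : y = 2 * s.host (hatRk s y) := by
  obtain ⟨hy1, hyn⟩ := hy
  rw [hatRk] at hr ⊢
  split_ifs at hr ⊢
  · omega
  · rw [host_rk hv ⟨by omega, by omega⟩]
    omega

end Slice

variable {A : NBA Q Alp} {s : Slice Q} {x : Alp} {y : ℕ} {q q' : Q}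

theorem mem_hatS_iff :
    q ∈ hatS A s x y ↔ q ∈ dTs A s (s.S ((y + 1) / 2)) x ∧ (q ∈ A.F ↔ y % 2 = 1) := by
  rw [hatS]
  split_ifs with hy
  · simp only [hy, mem_inter_iff, iff_true]
  · rw [show (y + 1) / 2 = y / 2 by omega]
    simp only [hy, Set.mem_sdiff, iff_false]

theorem exists_mem_delta_of_mem_hatS (h : q' ∈ hatS A s x y) :
    ∃ q ∈ s.S ((y + 1) / 2), q' ∈ A.delta q x := by
  obtain ⟨q, hq, hd⟩ := mem_iUnion₂.1 (mem_hatS_iff.1 h).1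
  exact ⟨q, hq, hd.1⟩

/- `q'` is inherited by the leftmost set of the slice having it as a successor. -/
theorem exists_mem_hatS {i : ℕ} (hv : s.Valid) (hi : i ∈ Icc 1 s.n) (hq : q ∈ s.S i)
    (hd : q' ∈ A.delta q x) : ∃ y ∈ Icc 1 (2 * i), q' ∈ hatS A s x y := by
  classical
  have hex : ∃ i, i ∈ Icc 1 s.n ∧ ∃ q ∈ s.S i, q' ∈ A.delta q x := ⟨i, hi, q, hq, hd⟩
  obtain ⟨i₀, ⟨hi₀, q₀, hq₀, hd₀⟩, hmin⟩ : ∃ i₀, (i₀ ∈ Icc 1 s.n ∧ ∃ q ∈ s.S i₀, q' ∈ A.delta q x) ∧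
      ∀ m, (m ∈ Icc 1 s.n ∧ ∃ q ∈ s.S m, q' ∈ A.delta q x) → i₀ ≤ m :=
    ⟨_, Nat.find_spec hex, fun m => Nat.find_min' hex⟩
  have hle := hmin i ⟨hi, q, hq, hd⟩
  have hdT : q' ∈ dTs A s (s.S i₀) x := by
    refine mem_biUnion hq₀ ⟨hd₀, fun hleft => ?_⟩
    rw [Slice.idx_eq hv hi₀ hq₀] at hleft
    obtain ⟨p, hp, hpd⟩ := mem_iUnion₂.1 hleft
    obtain ⟨m, hm, hpm⟩ := mem_iUnion₂.1 hp
    exact hm.2.not_ge (hmin m ⟨⟨hm.1, hm.2.le.trans hi₀.2⟩, p, hpm, hpd⟩)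
  have hi₀1 := hi₀.1
  by_cases hF : q' ∈ A.F
  · refine ⟨2 * i₀ - 1, ⟨by omega, by omega⟩, mem_hatS_iff.2 ⟨?_, iff_of_true hF (by omega)⟩⟩
    rwa [show (2 * i₀ - 1 + 1) / 2 = i₀ by omega]
  · refine ⟨2 * i₀, ⟨by omega, by omega⟩, mem_hatS_iff.2 ⟨?_, iff_of_false hF (by omega)⟩⟩
    rwa [show (2 * i₀ + 1) / 2 = i₀ by omega]

theorem tildeRk_le {z : ℕ → ℕ} {j : ℕ} (hy : y ∈ Ico (z j) (z (j + 1))) :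
    tildeRk s z j ≤ hatRk s y := Nat.sInf_le (mem_image_of_mem _ hy)

theorem exists_hatRk_eq_tildeRk {z : ℕ → ℕ} {j : ℕ} (hz : z j < z (j + 1)) :
    ∃ y ∈ Ico (z j) (z (j + 1)), hatRk s y = tildeRk s z j :=
  Nat.sInf_mem ((nonempty_Ico.2 hz).image (hatRk s))

/-! ### Transitions as blocks of step positions -/

/-- What the correctness proof uses of a transition from `s` on `x` to `s'` with dominating rank
`d`. Prune and merge are combined: the `j`-th set of `s'` collects the step positions
`z j, …, z (j + 1) - 1`, so that `tildeRk s z j` is its rank `α̌ j` before normalization. -/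
structure BlockStep (A : NBA Q Alp) (s : Slice Q) (x : Alp) (s' : Slice Q) (z : ℕ → ℕ)
    (d : ℕ) : Prop where
  valid : s.Valid
  valid' : s'.Valid
  strictMonoOn : StrictMonoOn z (Icc 1 (s'.n + 1))
  one_le : ∀ j ∈ Icc 1 s'.n, 1 ≤ z j
  apply_last : z (s'.n + 1) = 2 * s.n + 1
  exists_block : ∀ y ∈ Icc 1 (2 * s.n), (hatS A s x y).Nonempty → ∃ j, InBlock z s'.n y j
  S_eq : ∀ j ∈ Icc 1 s'.n, s'.S j = ⋃ y ∈ Ico (z j) (z (j + 1)), hatS A s x y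
  normalization : IsNormalization s'.n (tildeRk s z) s'.rk
  not_green : ∀ r < d, r ∉ greenSet A s x s'.n z
  not_red : ∀ r < d, r ∉ redSet s s'.n z
  eq_start : ∀ y j, InBlock z s'.n y j → (hatS A s x y).Nonempty → tildeRk s z j < d → y = z j
  le_carrier : ∀ y y' j, InBlock z s'.n y j → (hatS A s x y).Nonempty → InBlock z s'.n y' j →
    hatRk s y' = tildeRk s z j → tildeRk s z j ≤ d → y ≤ y'

namespace BlockStep

variable {s' : Slice Q} {z : ℕ → ℕ} {d i j r : ℕ}

theorem mem_of_inBlock (h : BlockStep A s x s' z d) (hy : InBlock z s'.n y j) :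
    y ∈ Icc 1 (2 * s.n) := by
  obtain ⟨⟨hj1, hjn⟩, hzy, hyz⟩ := hy
  have hone := h.one_le j ⟨hj1, hjn⟩
  have hlast := h.strictMonoOn.monotoneOn (a := j + 1) ⟨by omega, by omega⟩
    (right_mem_Icc.2 (by omega)) (by omega)
  rw [h.apply_last] at hlast
  exact ⟨by omega, by omega⟩

theorem le_of_inBlock (h : BlockStep A s x s' z d) {y' j' : ℕ} (hy : InBlock z s'.n y j)
    (hy' : InBlock z s'.n y' j') (hle : y ≤ y') : j ≤ j' :=
  hy.le_of_le h.strictMonoOn.monotoneOn hy' hle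

theorem exists_inBlock_hatRk_eq (h : BlockStep A s x s' z d) (hj : j ∈ Icc 1 s'.n) :
    ∃ y, InBlock z s'.n y j ∧ hatRk s y = tildeRk s z j := by
  obtain ⟨y, hy, hrk⟩ :=
    exists_hatRk_eq_tildeRk (s := s) (inBlock_start h.strictMonoOn hj).2.2
  exact ⟨y, ⟨hj, hy⟩, hrk⟩

theorem tildeRk_mem (h : BlockStep A s x s' z d) (hj : j ∈ Icc 1 s'.n) :
    tildeRk s z j ∈ Icc 1 (s.n + 1) := by
  obtain ⟨y, hy, hrk⟩ := h.exists_inBlock_hatRk_eq hj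
  exact hrk ▸ Slice.hatRk_mem h.valid (h.mem_of_inBlock hy)

theorem inBlock_two_mul_host (h : BlockStep A s x s' z d) (hj : j ∈ Icc 1 s'.n)
    (hle : tildeRk s z j ≤ s.n) : InBlock z s'.n (2 * s.host (tildeRk s z j)) j := by
  obtain ⟨y, hy, hrk⟩ := h.exists_inBlock_hatRk_eq hj
  rw [← hrk] at hle ⊢
  rwa [← Slice.eq_two_mul_host h.valid (h.mem_of_inBlock hy) hle]

theorem tildeRk_injective (h : BlockStep A s x s' z d) (hi : i ∈ Icc 1 s'.n)
    (hj : j ∈ Icc 1 s'.n) (hle : tildeRk s z i ≤ s.n) (heq : tildeRk s z i = tildeRk s z j) :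
    i = j := by
  have hbi := h.inBlock_two_mul_host hi hle
  rw [heq] at hbi hle
  exact hbi.unique h.strictMonoOn.monotoneOn (h.inBlock_two_mul_host hj hle)

theorem rk_le_tildeRk (h : BlockStep A s x s' z d) (hj : j ∈ Icc 1 s'.n)
    (hle : tildeRk s z j ≤ s.n) : s'.rk j ≤ tildeRk s z j :=
  h.normalization.le_of_injective (fun _ hi => (h.tildeRk_mem hi).1)
    (fun _ hi _ hj => h.tildeRk_injective hi hj) hj hle

theorem rk_lt_tildeRk (h : BlockStep A s x s' z d) (hj : j ∈ Icc 1 s'.n)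
    (hle : tildeRk s z j ≤ s.n) (hr : r ∈ redSet s s'.n z) (hlt : r < tildeRk s z j) :
    s'.rk j < tildeRk s z j := by
  obtain ⟨⟨y, hy, rfl⟩, hr⟩ := hr
  exact h.normalization.lt_of_forall_ne (fun _ hi => (h.tildeRk_mem hi).1)
    (fun _ hi _ hj => h.tildeRk_injective hi hj) (Slice.hatRk_mem h.valid hy).1
    (fun i hi heq => hr ⟨i, hi, heq⟩) hj hle hlt

theorem exists_tildeRk_eq (h : BlockStep A s x s' z d) (hn : 1 ≤ s.n)
    (hr : r ∈ Icc 1 (s.n + 1)) (hred : r ∉ redSet s s'.n z) :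
    ∃ j ∈ Icc 1 s'.n, tildeRk s z j = r := by
  by_contra hnot
  refine hred ⟨?_, hnot⟩
  rcases hr.2.lt_or_eq with hlt | rfl
  · have hr : r ∈ Icc 1 s.n := ⟨hr.1, Nat.lt_succ_iff.1 hlt⟩
    exact ⟨_, Slice.two_mul_host_mem h.valid hr, Slice.hatRk_two_mul_host h.valid hr⟩
  · exact ⟨1, ⟨le_rfl, by omega⟩, rfl⟩

theorem le_n (h : BlockStep A s x s' z d) (hn : 1 ≤ s.n) (hr : r ≤ s.n + 1) (hrd : r ≤ d)
    (hred : r ∉ redSet s s'.n z) : r ≤ s'.n := by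
  rcases r.eq_zero_or_pos with rfl | hpos
  · exact Nat.zero_le _
  obtain ⟨j, hj, hjr⟩ := h.exists_tildeRk_eq hn ⟨hpos, hr⟩ hred
  have hle : tildeRk s z j ≤ s'.rk j := by
    refine h.normalization.le_apply (N := r) (fun r' hr' => ?_) hj hjr.le
    rcases hr'.2.lt_or_eq with hlt | rfl
    · exact h.exists_tildeRk_eq hn ⟨hr'.1, by omega⟩ (h.not_red r' (by omega))
    · exact ⟨j, hj, hjr⟩
  have hrk := (Slice.rk_mem h.valid' hj).2
  omega

end BlockStep

/-- The rank `r` occurs in `s` and survives the transition: it is not above the dominating rank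
and not red. -/
structure RankPersists (s s' : Slice Q) (z : ℕ → ℕ) (d r : ℕ) : Prop where
  mem : r ∈ Icc 1 s.n
  le : r ≤ d
  not_red : r ∉ redSet s s'.n z

namespace BlockStep

variable {s' : Slice Q} {z : ℕ → ℕ} {d k r : ℕ}

theorem rankPersists_of_lt (h : BlockStep A s x s' z d) (hr : r ∈ Icc 1 s.n) (hrd : r < d) :
    RankPersists s s' z d r := ⟨hr, hrd.le, h.not_red r hrd⟩

theorem tildeRk_host (h : BlockStep A s x s' z d) (hk : RankPersists s s' z d k) :
    s'.host k ∈ Icc 1 s'.n ∧ tildeRk s z (s'.host k) = k := by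
  obtain ⟨hk1, hkn⟩ := hk.mem
  have hn : 1 ≤ s.n := hk1.trans hkn
  have hlab : ∀ r ∈ Icc 1 k, ∃ j ∈ Icc 1 s'.n, tildeRk s z j = r := fun r hr => by
    refine h.exists_tildeRk_eq hn ⟨hr.1, by have := hr.2; omega⟩ ?_
    rcases hr.2.lt_or_eq with hlt | rfl
    · exact h.not_red r (hlt.trans_le hk.le)
    · exact hk.not_red
  obtain ⟨j, hj, hjk⟩ := hlab k (right_mem_Icc.2 hk1)
  have hrk : s'.rk j = k := by
    have hle := h.rk_le_tildeRk hj (by omega)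
    have hge := h.normalization.le_apply hlab hj hjk.le
    omega
  rw [← hrk, Slice.host_rk h.valid' hj, hrk]
  exact ⟨hj, hjk⟩

theorem inBlock_host (h : BlockStep A s x s' z d) (hk : RankPersists s s' z d k) :
    InBlock z s'.n (2 * s.host k) (s'.host k) := by
  obtain ⟨hmem, heq⟩ := h.tildeRk_host hk
  have hb := h.inBlock_two_mul_host hmem (heq.trans_le hk.mem.2)
  rwa [heq] at hb

theorem host_lt_of_inBlock {j : ℕ} (h : BlockStep A s x s' z d) (hk : RankPersists s s' z d k)
    (hy : InBlock z s'.n y j) (hne : (hatS A s x y).Nonempty) (hlt : 2 * s.host k < y) :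
    s'.host k < j := by
  have hb := h.inBlock_host hk
  obtain ⟨-, heq⟩ := h.tildeRk_host hk
  refine lt_of_le_of_ne (h.le_of_inBlock hb hy hlt.le) ?_
  rintro rfl
  exact hlt.not_ge (h.le_carrier y _ _ hy hne hb
    ((Slice.hatRk_two_mul_host h.valid hk.mem).trans heq.symm) (heq.trans_le hk.le))

theorem start_host (h : BlockStep A s x s' z d) (hk : k ∈ Icc 1 s.n) (hkd : k < d) :
    z (s'.host k) = 2 * s.host k := by
  have hp := h.rankPersists_of_lt hk hkd
  obtain ⟨hmem, heq⟩ := h.tildeRk_host hp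
  have hne : (hatS A s x (2 * s.host k)).Nonempty := by
    refine nonempty_iff_ne_empty.2 fun hempty => h.not_green k hkd ⟨⟨_, hmem, heq⟩, ?_⟩
    exact ⟨_, Slice.two_mul_host_mem h.valid hk, hempty, Slice.hatRk_two_mul_host h.valid hk⟩
  exact (h.eq_start _ _ (h.inBlock_host hp) hne (heq.trans_lt hkd)).symm

end BlockStep

section Transitions

variable {s' : Slice Q} {nt n' d r l j : ℕ} {xs b : ℕ → ℕ}

theorem IsPrune.strictMonoOn (hp : IsPrune A s x nt xs) : StrictMonoOn xs (Icc 1 (nt + 1)) := by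
  obtain ⟨hmono, hmem, -, hlast⟩ := hp
  rintro i ⟨hi1, -⟩ j ⟨-, hjn⟩ hij
  have hi : i ∈ Icc 1 nt := ⟨hi1, by omega⟩
  rcases hjn.lt_or_eq with hlt | rfl
  · exact hmono hi ⟨by omega, by omega⟩ hij
  · have := (hmem i hi).1.2
    omega

theorem IsPrune.exists_inBlock (hp : IsPrune A s x nt xs) (hy : y ∈ Icc 1 (2 * s.n))
    (hne : (hatS A s x y).Nonempty) : ∃ l, xs l = y ∧ InBlock xs nt y l := by
  obtain ⟨l, hl, rfl⟩ := hp.2.2.1 y hy hne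
  exact ⟨l, rfl, inBlock_start hp.strictMonoOn hl⟩

theorem IsPrune.eq_start (hp : IsPrune A s x nt xs) (hy : InBlock xs nt y l)
    (hne : (hatS A s x y).Nonempty) : y = xs l := by
  have hy1 : 1 ≤ y := (hp.2.1 l hy.1).1.1.trans hy.2.1
  have hlast := hp.strictMonoOn.monotoneOn (a := l + 1) ⟨by omega, Nat.succ_le_succ hy.1.2⟩
    (right_mem_Icc.2 (Nat.le_add_left 1 nt)) (Nat.succ_le_succ hy.1.2)
  have hyn : y < 2 * s.n + 1 := hp.2.2.2 ▸ hy.2.2.trans_le hlast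
  obtain ⟨i, rfl, hi⟩ := hp.exists_inBlock ⟨hy1, by omega⟩ hne
  rw [hi.unique hp.strictMonoOn.monotoneOn hy]

/-- The first index of the `j`-th interval of the merge partition with boundaries `b`. -/
def mergeStart (b : ℕ → ℕ) (j : ℕ) : ℕ := b (j - 1) + 1

theorem inBlock_mergeStart_iff :
    InBlock (mergeStart b) n' l j ↔ j ∈ Icc 1 n' ∧ l ∈ Icc (b (j - 1) + 1) (b j) := by
  simp only [InBlock, mergeStart, mem_Ico, mem_Icc, Nat.add_sub_cancel, Nat.lt_succ_iff]

namespace IsIntervalPartition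

theorem strictMonoOn_mergeStart (hb : IsIntervalPartition nt n' b) :
    StrictMonoOn (mergeStart b) (Icc 1 (n' + 1)) := fun i hi j hj hij =>
  Nat.succ_lt_succ (hb.2.2 ⟨Nat.zero_le _, by have := hi.2; omega⟩
    ⟨Nat.zero_le _, by have := hj.2; omega⟩ (by have := hi.1; omega))

theorem mapsTo_mergeStart (hb : IsIntervalPartition nt n' b) :
    MapsTo (mergeStart b) (Icc 1 (n' + 1)) (Icc 1 (nt + 1)) := fun j hj => by
  have hle := hb.2.2.monotoneOn (a := j - 1) ⟨Nat.zero_le _, by have := hj.2; omega⟩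
    (right_mem_Icc.2 n'.zero_le) (by have := hj.2; omega)
  rw [hb.2.1] at hle
  exact ⟨by simp [mergeStart], Nat.succ_le_succ hle⟩

theorem mem_Icc_of_inBlock (hb : IsIntervalPartition nt n' b)
    (hl : InBlock (mergeStart b) n' l j) : l ∈ Icc 1 nt := by
  obtain ⟨hj, hjl, hlj⟩ := hl
  have h1 := (hb.mapsTo_mergeStart ⟨hj.1, hj.2.trans n'.le_succ⟩).1
  have h2 := (hb.mapsTo_mergeStart (show j + 1 ∈ _ from ⟨by omega, Nat.succ_le_succ hj.2⟩)).2
  exact ⟨by omega, by omega⟩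

theorem exists_inBlock (hb : IsIntervalPartition nt n' b) (hl : l ∈ Icc 1 nt) :
    ∃ j, InBlock (mergeStart b) n' l j := by
  obtain ⟨hb0, hbn, -⟩ := hb
  obtain ⟨hl1, hln⟩ := hl
  have hn : 1 ≤ n' := by
    by_contra! hlt
    obtain rfl : n' = 0 := by omega
    omega
  refine _root_.exists_inBlock (i := 1) ⟨le_rfl, hn⟩ ⟨?_, ?_⟩
  · rw [mergeStart, hb0]
    exact hl1
  · rw [mergeStart, Nat.add_sub_cancel, hbn]
    omega

end IsIntervalPartition

theorem inBlock_comp_mergeStart_iff (hp : IsPrune A s x nt xs)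
    (hb : IsIntervalPartition nt n' b) :
    InBlock (xs ∘ mergeStart b) n' y j ↔
      ∃ l, InBlock (mergeStart b) n' l j ∧ InBlock xs nt y l :=
  inBlock_comp_iff hp.strictMonoOn hb.mapsTo_mergeStart

theorem isLeast_tildeRk_comp_mergeStart (hp : IsPrune A s x nt xs)
    (hb : IsIntervalPartition nt n' b) (hj : j ∈ Icc 1 n') :
    IsLeast (tildeRk s xs '' Icc (b (j - 1) + 1) (b j)) (tildeRk s (xs ∘ mergeStart b) j) := by
  have hle : ∀ l, InBlock (mergeStart b) n' l j →
      tildeRk s (xs ∘ mergeStart b) j ≤ tildeRk s xs l := fun l hl => by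
    have hb' := inBlock_start hp.strictMonoOn (hb.mem_Icc_of_inBlock hl)
    obtain ⟨y, hy, heq⟩ := exists_hatRk_eq_tildeRk (s := s) hb'.2.2
    exact heq ▸ tildeRk_le ((inBlock_comp_mergeStart_iff hp hb).2 ⟨l, hl, hb'.1, hy⟩).2
  have hz : (xs ∘ mergeStart b) j < (xs ∘ mergeStart b) (j + 1) :=
    (inBlock_start (hp.strictMonoOn.comp hb.strictMonoOn_mergeStart hb.mapsTo_mergeStart) hj).2.2
  obtain ⟨y, hy, heq⟩ := exists_hatRk_eq_tildeRk (s := s) hz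
  obtain ⟨l, hl, hyl⟩ := (inBlock_comp_mergeStart_iff hp hb).1 ⟨hj, hy⟩
  exact ⟨⟨l, (inBlock_mergeStart_iff.1 hl).2,
      le_antisymm ((tildeRk_le hyl.2).trans_eq heq) (hle l hl)⟩,
    forall_mem_image.2 fun l hl => hle l (inBlock_mergeStart_iff.2 ⟨hj, hl⟩)⟩

theorem MergeConstraints.eq_of_tildeRk_lt (hm : MergeConstraints n' b (tildeRk s xs) d)
    {l' : ℕ} (hl : InBlock (mergeStart b) n' l j) (hl' : InBlock (mergeStart b) n' l' j)
    (hlt : tildeRk s xs l' < d) : l = l' := by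
  rw [inBlock_mergeStart_iff] at hl hl'
  have heq := (hm j hl'.1 l' hl'.2).1 hlt
  have h1 := hl.2.1
  have h2 := hl.2.2
  have h3 := hl'.2.1
  have h4 := hl'.2.2
  omega

theorem exists_tildeRk_comp_mergeStart_eq_iff (hp : IsPrune A s x nt xs)
    (hb : IsIntervalPartition nt n' b) (hm : MergeConstraints n' b (tildeRk s xs) d)
    (hr : r ≤ d) :
    (∃ j ∈ Icc 1 n', tildeRk s (xs ∘ mergeStart b) j = r) ↔
      ∃ l ∈ Icc 1 nt, tildeRk s xs l = r := by
  constructor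
  · rintro ⟨j, hj, rfl⟩
    obtain ⟨l, hl, heq⟩ := (isLeast_tildeRk_comp_mergeStart (s := s) hp hb hj).1
    exact ⟨l, hb.mem_Icc_of_inBlock (inBlock_mergeStart_iff.2 ⟨hj, hl⟩), heq⟩
  · rintro ⟨l, hl, rfl⟩
    obtain ⟨j, hlj⟩ := hb.exists_inBlock hl
    obtain ⟨⟨l', hl', heq⟩, hle⟩ := isLeast_tildeRk_comp_mergeStart (s := s) hp hb hlj.1
    have hll := hle (mem_image_of_mem _ (inBlock_mergeStart_iff.1 hlj).2)
    refine ⟨j, hlj.1, hll.antisymm (not_lt.1 fun hlt => ?_)⟩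
    have := hm.eq_of_tildeRk_lt hlj (inBlock_mergeStart_iff.2 ⟨hlj.1, hl'⟩)
      (heq ▸ hlt.trans_le hr)
    subst this
    exact hlt.ne heq.symm

theorem mem_greenSet_comp_mergeStart_iff (hp : IsPrune A s x nt xs)
    (hb : IsIntervalPartition nt n' b) (hm : MergeConstraints n' b (tildeRk s xs) d)
    (hr : r ≤ d) :
    r ∈ greenSet A s x n' (xs ∘ mergeStart b) ↔ r ∈ greenSet A s x nt xs :=
  and_congr_left' (exists_tildeRk_comp_mergeStart_eq_iff hp hb hm hr)

theorem mem_redSet_comp_mergeStart_iff (hp : IsPrune A s x nt xs)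
    (hb : IsIntervalPartition nt n' b) (hm : MergeConstraints n' b (tildeRk s xs) d)
    (hr : r ≤ d) :
    r ∈ redSet s n' (xs ∘ mergeStart b) ↔ r ∈ redSet s nt xs :=
  and_congr_right' (exists_tildeRk_comp_mergeStart_eq_iff hp hb hm hr).not

theorem notMem_of_lt_domRank {G R : Set ℕ} {c : ℕ} (h : r < domRank G R c) :
    r ∉ G ∧ r ∉ R := by
  rw [← not_or]
  intro hr
  rw [domRank, if_pos ⟨r, hr⟩] at h
  exact Nat.notMem_of_lt_sInf h hr

theorem domRank_mem_or_eq (G R : Set ℕ) (c : ℕ) :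
    domRank G R c ∈ G ∨ domRank G R c ∈ R ∨ domRank G R c = c + 1 := by
  by_cases h : (G ∪ R).Nonempty
  · rw [← or_assoc]
    left
    rw [domRank, if_pos h]
    exact Nat.sInf_mem h
  · exact .inr (.inr (if_neg h))

theorem MergeConstraints.eq_start (hm : MergeConstraints n' b (tildeRk s xs) d)
    (hp : IsPrune A s x nt xs) (hb : IsIntervalPartition nt n' b)
    (hy : InBlock (xs ∘ mergeStart b) n' y j) (hne : (hatS A s x y).Nonempty)
    (hlt : tildeRk s (xs ∘ mergeStart b) j < d) : y = (xs ∘ mergeStart b) j := by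
  obtain ⟨l, hl, hyl⟩ := (inBlock_comp_mergeStart_iff hp hb).1 hy
  obtain ⟨l', hl', heq⟩ := (isLeast_tildeRk_comp_mergeStart (s := s) hp hb hl.1).1
  have hsingle : ∀ i, InBlock (mergeStart b) n' i j → i = l' := fun i hi =>
    hm.eq_of_tildeRk_lt hi (inBlock_mergeStart_iff.2 ⟨hl.1, hl'⟩) (heq ▸ hlt)
  rw [hp.eq_start hyl hne, hsingle l hl, Function.comp_apply,
    hsingle _ (inBlock_start hb.strictMonoOn_mergeStart hl.1)]

theorem MergeConstraints.le_carrier (hm : MergeConstraints n' b (tildeRk s xs) d)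
    (hp : IsPrune A s x nt xs) (hb : IsIntervalPartition nt n' b) {y' : ℕ}
    (hy : InBlock (xs ∘ mergeStart b) n' y j) (hne : (hatS A s x y).Nonempty)
    (hy' : InBlock (xs ∘ mergeStart b) n' y' j)
    (heq : hatRk s y' = tildeRk s (xs ∘ mergeStart b) j)
    (hle : tildeRk s (xs ∘ mergeStart b) j ≤ d) : y ≤ y' := by
  obtain ⟨l, hl, hyl⟩ := (inBlock_comp_mergeStart_iff hp hb).1 hy
  obtain ⟨l', hl', hyl'⟩ := (inBlock_comp_mergeStart_iff hp hb).1 hy'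
  have hll : l ≤ l' := by
    rcases ((tildeRk_le hyl'.2).trans (heq.trans_le hle)).lt_or_eq with hlt | hd
    · exact (hm.eq_of_tildeRk_lt hl hl' hlt).le
    · rw [(hm j hl'.1 l' (inBlock_mergeStart_iff.1 hl').2).2 hd]
      exact (inBlock_mergeStart_iff.1 hl).2.2
  rw [hp.eq_start hyl hne]
  exact (hp.strictMonoOn.monotoneOn ⟨hyl.1.1, hyl.1.2.trans nt.le_succ⟩
    ⟨hyl'.1.1, hyl'.1.2.trans nt.le_succ⟩ hll).trans hyl'.2.1

theorem iUnion_merge_eq (hp : IsPrune A s x nt xs) (hb : IsIntervalPartition nt n' b)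
    (hj : j ∈ Icc 1 n') :
    ⋃ l ∈ Icc (b (j - 1) + 1) (b j), hatS A s x (xs l) =
      ⋃ y ∈ Ico ((xs ∘ mergeStart b) j) ((xs ∘ mergeStart b) (j + 1)), hatS A s x y := by
  ext q
  simp only [mem_iUnion₂, exists_prop]
  constructor
  · rintro ⟨l, hl, hq⟩
    have hl := inBlock_mergeStart_iff.2 ⟨hj, hl⟩
    have hstart := inBlock_start hp.strictMonoOn (hb.mem_Icc_of_inBlock hl)
    exact ⟨xs l, ((inBlock_comp_mergeStart_iff hp hb).2 ⟨l, hl, hstart⟩).2, hq⟩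
  · rintro ⟨y, hy, hq⟩
    obtain ⟨l, hl, hyl⟩ := (inBlock_comp_mergeStart_iff hp hb).1 ⟨hj, hy⟩
    exact ⟨l, (inBlock_mergeStart_iff.1 hl).2, hp.eq_start hyl ⟨q, hq⟩ ▸ hq⟩

theorem TransVia.blockStep [Fintype Q] {pr : ℕ} (hv : s.Valid)
    (h : TransVia A s x s' pr nt xs n' b) :
    BlockStep A s x s' (xs ∘ mergeStart b)
      (domRank (greenSet A s x nt xs) (redSet s nt xs) (Fintype.card Q)) := by
  obtain ⟨hp, hb, hm, -, rfl, hS, hv', hrk⟩ := h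
  exact {
    valid := hv
    valid' := hv'
    strictMonoOn := hp.strictMonoOn.comp hb.strictMonoOn_mergeStart hb.mapsTo_mergeStart
    one_le := fun j hj =>
      have hl := inBlock_start hb.strictMonoOn_mergeStart hj
      (hp.2.1 _ (hb.mem_Icc_of_inBlock hl)).1.1
    apply_last := by
      rw [Function.comp_apply, mergeStart, Nat.add_sub_cancel, hb.2.1, hp.2.2.2]
    exists_block := fun y hy hne => by
      obtain ⟨l, -, hl⟩ := hp.exists_inBlock hy hne
      obtain ⟨j, hj⟩ := hb.exists_inBlock hl.1
      exact ⟨j, (inBlock_comp_mergeStart_iff hp hb).2 ⟨l, hj, hl⟩⟩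
    S_eq := fun j hj => (hS j hj).trans (iUnion_merge_eq hp hb hj)
    normalization := ⟨hv'.2.2.1, fun i hi j hj hlt => hrk i hi j hj <| by
      rwa [(isLeast_tildeRk_comp_mergeStart hp hb hi).csInf_eq,
        (isLeast_tildeRk_comp_mergeStart hp hb hj).csInf_eq]⟩
    not_green := fun r hr =>
      (mem_greenSet_comp_mergeStart_iff hp hb hm hr.le).not.2 (notMem_of_lt_domRank hr).1
    not_red := fun r hr =>
      (mem_redSet_comp_mergeStart_iff hp hb hm hr.le).not.2 (notMem_of_lt_domRank hr).2
    eq_start := fun _ _ => hm.eq_start hp hb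
    le_carrier := fun _ _ _ => hm.le_carrier hp hb }

/-- A transition with priority `pr`, whose dominating rank `d` is green if `pr` is even, and red or
absent if `pr` is odd. -/
structure PriorityStep [Fintype Q] (A : NBA Q Alp) (s : Slice Q) (x : Alp) (s' : Slice Q)
    (z : ℕ → ℕ) (d pr : ℕ) : Prop extends BlockStep A s x s' z d where
  mem_Icc : d ∈ Icc 1 (Fintype.card Q + 1)
  priority : (d ∈ greenSet A s x s'.n z ∧ pr = 2 * d) ∨
    ((d ∈ redSet s s'.n z ∨ Fintype.card Q < d) ∧ pr = 2 * d - 1)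

namespace PriorityStep

variable [Fintype Q] {z : ℕ → ℕ} {k pr : ℕ}

theorem priority_le (h : PriorityStep A s x s' z d pr) : pr ≤ 2 * (Fintype.card Q + 1) := by
  have hd := h.mem_Icc.2
  rcases h.priority with ⟨-, rfl⟩ | ⟨-, rfl⟩ <;> omega

theorem le_of_le_priority (h : PriorityStep A s x s' z d pr) (hk : 2 * k ≤ pr + 1) : k ≤ d := by
  have hd := h.mem_Icc.1
  rcases h.priority with ⟨-, rfl⟩ | ⟨-, rfl⟩ <;> omega

theorem notMem_redSet (h : PriorityStep A s x s' z d pr) (hk : 2 * k ≤ pr) :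
    k ∉ redSet s s'.n z := by
  have hd := h.mem_Icc.1
  rcases h.priority with ⟨hgreen, rfl⟩ | ⟨-, rfl⟩
  · rcases (show k ≤ d by omega).lt_or_eq with hlt | rfl
    · exact h.not_red k hlt
    · exact fun hred => hred.2 hgreen.1
  · exact h.not_red k (by omega)

theorem mem_greenSet (h : PriorityStep A s x s' z d (2 * k)) : k ∈ greenSet A s x s'.n z := by
  have hd := h.mem_Icc.1
  rcases h.priority with ⟨hgreen, heq⟩ | ⟨-, heq⟩
  · rwa [show k = d by omega]
  · omega

theorem mem_redSet_or_card_lt (h : PriorityStep A s x s' z d (2 * k + 1)) :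
    k + 1 ∈ redSet s s'.n z ∨ Fintype.card Q < k + 1 := by
  rcases h.priority with ⟨-, heq⟩ | ⟨hred, heq⟩
  · omega
  · rwa [show k + 1 = d by omega]

end PriorityStep

theorem UnifiedTrans.exists_priorityStep [Fintype Q] {pr : ℕ} (hv : s.Valid)
    (h : UnifiedTrans A s x s' pr) : ∃ z d, PriorityStep A s x s' z d pr := by
  obtain ⟨nt, xs, n', b, h⟩ := h
  have hstep := h.blockStep hv
  obtain ⟨hp, hb, hm, hpr, rfl, -⟩ := h
  have hdom := domRank_mem_or_eq (greenSet A s x nt xs) (redSet s nt xs) (Fintype.card Q)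
  generalize domRank (greenSet A s x nt xs) (redSet s nt xs) (Fintype.card Q) = d at *
  rw [← mem_greenSet_comp_mergeStart_iff hp hb hm le_rfl,
    ← mem_redSet_comp_mergeStart_iff hp hb hm le_rfl] at hdom
  rw [← mem_greenSet_comp_mergeStart_iff hp hb hm le_rfl] at hpr
  have hrank : ∀ j ∈ Icc 1 (2 * s.n), hatRk s j ∈ Icc 1 (Fintype.card Q + 1) := fun j hj =>
    Icc_subset_Icc_right (Nat.succ_le_succ (Slice.n_le_card hv)) (Slice.hatRk_mem hv hj)
  refine ⟨_, d, hstep, ?_, hpr.imp_right fun hodd => ⟨?_, hodd.2⟩⟩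
  · rcases hdom with ⟨-, j, hj, -, rfl⟩ | ⟨⟨j, hj, rfl⟩, -⟩ | rfl
    · exact hrank j hj
    · exact hrank j hj
    · exact ⟨by omega, le_rfl⟩
  · exact (hdom.resolve_left hodd.1).imp_right fun hd => by omega

end Transitions

/-! ### Soundness -/

/-- `q'` is a successor of `q` on `x` that `s'` inherits from the set of `s` containing `q`: in
the history of the slices, `q'` descends from `q`. -/
structure TreeEdge (A : NBA Q Alp) (s : Slice Q) (x : Alp) (s' : Slice Q) (z : ℕ → ℕ)
    (q q' : Q) : Prop where
  mem : q ∈ s.states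
  mem_delta : q' ∈ A.delta q x
  exists_inBlock : ∃ y, InBlock z s'.n y (s'.idx q') ∧ q' ∈ hatS A s x y ∧ (y + 1) / 2 = s.idx q

theorem BlockStep.exists_treeEdge {s' : Slice Q} {z : ℕ → ℕ} {d : ℕ}
    (h : BlockStep A s x s' z d) (hq' : q' ∈ s'.states) :
    ∃ q ∈ s.states, TreeEdge A s x s' z q q' := by
  obtain ⟨hidx, hmem⟩ := Slice.idx_mem hq'
  rw [h.S_eq _ hidx] at hmem
  obtain ⟨y, hy, hq'y⟩ := mem_iUnion₂.1 hmem
  obtain ⟨q, hq, hd⟩ := exists_mem_delta_of_mem_hatS hq'y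
  have hmem := h.mem_of_inBlock ⟨hidx, hy⟩
  have hi : (y + 1) / 2 ∈ Icc 1 s.n := by
    obtain ⟨hy1, hyn⟩ := hmem
    exact ⟨by omega, by omega⟩
  have hq_states : q ∈ s.states := mem_biUnion hi hq
  exact ⟨q, hq_states, hq_states, hd, y, ⟨hidx, hy⟩, hq'y, (Slice.idx_eq h.valid hi hq).symm⟩

namespace TreeEdge

variable {s' : Slice Q} {z : ℕ → ℕ} {d k : ℕ} {p p' : Q}

theorem inBlock_two_mul_idx (e : TreeEdge A s x s' z q q') (hF : q' ∉ A.F) :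
    InBlock z s'.n (2 * s.idx q) (s'.idx q') ∧ q' ∈ hatS A s x (2 * s.idx q) := by
  obtain ⟨y, hy, hmem, heq⟩ := e.exists_inBlock
  have hodd := (mem_hatS_iff.1 hmem).2.not.1 hF
  obtain rfl : y = 2 * s.idx q := by omega
  exact ⟨hy, hmem⟩

theorem idx_le_host (e : TreeEdge A s x s' z q q') (h : BlockStep A s x s' z d)
    (hk : RankPersists s s' z d k) (hle : s.idx q ≤ s.host k) : s'.idx q' ≤ s'.host k := by
  obtain ⟨y, hy, -, heq⟩ := e.exists_inBlock
  exact h.le_of_inBlock hy (h.inBlock_host hk) (by omega)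

theorem host_lt_idx (e : TreeEdge A s x s' z q q') (h : BlockStep A s x s' z d)
    (hk : RankPersists s s' z d k) (hlt : s.host k < s.idx q) : s'.host k < s'.idx q' := by
  obtain ⟨y, hy, hmem, heq⟩ := e.exists_inBlock
  exact h.host_lt_of_inBlock hk hy ⟨q', hmem⟩ (by omega)

theorem idx_le_idx (e : TreeEdge A s x s' z p p') (e' : TreeEdge A s x s' z q q')
    (h : BlockStep A s x s' z d) (hF : q' ∉ A.F) (hle : s.idx p ≤ s.idx q) :
    s'.idx p' ≤ s'.idx q' := by
  obtain ⟨y, hy, -, heq⟩ := e.exists_inBlock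
  exact h.le_of_inBlock hy (e'.inBlock_two_mul_idx hF).1 (by omega)

theorem host_le_idx (e : TreeEdge A s x s' z q q') (h : BlockStep A s x s' z d)
    (hk : RankPersists s s' z d k) (hF : q' ∉ A.F) (hle : s.host k ≤ s.idx q) :
    s'.host k ≤ s'.idx q' :=
  h.le_of_inBlock (h.inBlock_host hk) (e.inBlock_two_mul_idx hF).1 (by omega)

theorem notMem_greenSet (e : TreeEdge A s x s' z q q') (h : BlockStep A s x s' z d)
    (hk : k ≤ s.n) (hF : q' ∉ A.F) (heq : s.idx q = s.host k) : k ∉ greenSet A s x s'.n z := by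
  rintro ⟨-, y, hy, hempty, rfl⟩
  have hmem := (e.inBlock_two_mul_idx hF).2
  rw [heq, ← Slice.eq_two_mul_host h.valid hy hk, hempty] at hmem
  exact hmem

end TreeEdge

section Runs

variable {s : ℕ → Slice Q} {w : ℕ → Alp} {z : ℕ → ℕ → ℕ} {d : ℕ → ℕ} {k N T : ℕ}

theorem eventually_rankPersists
    (hs : ∀ t, BlockStep A (s t) (w t) (s (t + 1)) (z t) (d t)) (hk1 : 1 ≤ k)
    (hd : ∀ᶠ t in atTop, k ≤ d t)
    (hred : ∀ᶠ t in atTop, k ∉ redSet (s t) (s (t + 1)).n (z t))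
    (hgreen : ∃ᶠ t in atTop, k ∈ greenSet A (s t) (w t) (s (t + 1)).n (z t)) :
    ∀ᶠ t in atTop, RankPersists (s t) (s (t + 1)) (z t) (d t) k := by
  have hn : ∀ᶠ t in atTop, k ≤ (s t).n := by
    refine eventually_of_frequently_of_step (Tendsto.frequently (tendsto_add_atTop_nat 1) <|
      (hgreen.and_eventually (hd.and hred)).mono ?_) ((hd.and hred).mono ?_)
    · rintro t ⟨⟨-, y, hy, -, hyk⟩, hkd, hkr⟩
      have hmem := Slice.hatRk_mem (hs t).valid hy
      have hn : 1 ≤ (s t).n := by have := hy.1.trans hy.2; omega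
      exact (hs t).le_n hn (hyk ▸ hmem.2) hkd hkr
    · exact fun t ⟨hkd, hkr⟩ hkn => (hs t).le_n (hk1.trans hkn) (hkn.trans (Nat.le_succ _)) hkd hkr
  filter_upwards [hn, hd, hred] with t hkn hkd hkr
  exact ⟨⟨hk1, hkn⟩, hkd, hkr⟩

theorem exists_path_to_host
    (hs : ∀ t, BlockStep A (s t) (w t) (s (t + 1)) (z t) (d t)) (hk : k ∈ Icc 1 (s T).n) :
    ∃ p : ℕ → Q, (s T).idx (p T) = (s T).host k ∧
      ∀ t < T, TreeEdge A (s t) (w t) (s (t + 1)) (z t) (p t) (p (t + 1)) := by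
  have hmem := Slice.host_mem (hs T).valid hk
  obtain ⟨q, hq⟩ := (hs T).valid.1 _ hmem
  obtain ⟨p, hpT, hp⟩ := exists_backward_chain (S := fun t => (s t).states)
    (fun t q' => (hs t).exists_treeEdge) T q (mem_biUnion hmem hq)
  exact ⟨p, by rw [hpT, Slice.idx_eq (hs T).valid hmem hq], hp⟩

/- At time `N` the path `p` cannot be to the right of the host of `k`, since it ends there, and it
does not get to the right of `ρ` while `ρ` avoids `F`. -/
theorem idx_eq_host_of_avoids {ρ p : ℕ → Q}
    (hs : ∀ t, BlockStep A (s t) (w t) (s (t + 1)) (z t) (d t))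
    (hk : ∀ t ≥ N, RankPersists (s t) (s (t + 1)) (z t) (d t) k)
    (hρ : ∀ t, TreeEdge A (s t) (w t) (s (t + 1)) (z t) (ρ t) (ρ (t + 1)))
    (hF : ∀ t ≥ N, ρ t ∉ A.F) (hNT : N ≤ T) (hpN : p N = ρ N)
    (hpT : (s T).idx (p T) = (s T).host k)
    (hp : ∀ t < T, TreeEdge A (s t) (w t) (s (t + 1)) (z t) (p t) (p (t + 1))) :
    ∀ t ≥ T, (s t).idx (ρ t) = (s t).host k := by
  have hstart : (s N).idx (ρ N) ≤ (s N).host k := by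
    by_contra! hlt
    have hright : ∀ t ≥ N, t ≤ T → (s t).host k < (s t).idx (p t) := fun t ht => by
      induction t, ht using Nat.le_induction with
      | base => exact fun _ => hpN ▸ hlt
      | succ t ht ih =>
        exact fun htT => (hp t htT).host_lt_idx (hs t) (hk t ht) (ih (Nat.le_of_lt htT))
    exact (hright T hNT le_rfl).ne hpT.symm
  have hle : ∀ t ≥ N, (s t).idx (ρ t) ≤ (s t).host k := fun t ht => by
    induction t, ht using Nat.le_induction with
    | base => exact hstart
    | succ t ht ih => exact (hρ t).idx_le_host (hs t) (hk t ht) ih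
  have hpρ : ∀ t ≥ N, t ≤ T → (s t).idx (p t) ≤ (s t).idx (ρ t) := fun t ht => by
    induction t, ht using Nat.le_induction with
    | base => exact fun _ => by rw [hpN]
    | succ t ht ih =>
      exact fun htT => (hp t htT).idx_le_idx (hρ t) (hs t) (hF _ (Nat.le_succ_of_le ht))
        (ih (Nat.le_of_lt htT))
  refine fun t ht => (hle t (hNT.trans ht)).antisymm ?_
  induction t, ht using Nat.le_induction with
  | base => exact hpT ▸ hpρ T hNT le_rfl
  | succ t ht ih =>
    exact (hρ t).host_le_idx (hs t) (hk t (hNT.trans ht)) (hF _ (by omega)) ih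

theorem accepts_of_frequently_green [Finite Q]
    (hs : ∀ t, BlockStep A (s t) (w t) (s (t + 1)) (z t) (d t))
    (hn : (s 0).n = 1) (hS : (s 0).S 1 = A.Q0) (hk1 : 1 ≤ k)
    (hd : ∀ᶠ t in atTop, k ≤ d t)
    (hred : ∀ᶠ t in atTop, k ∉ redSet (s t) (s (t + 1)).n (z t))
    (hgreen : ∃ᶠ t in atTop, k ∈ greenSet A (s t) (w t) (s (t + 1)).n (z t)) :
    A.Accepts w := by
  obtain ⟨N₀, hk⟩ := eventually_atTop.1 (eventually_rankPersists hs hk1 hd hred hgreen)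
  choose p hpT hp using fun T => exists_path_to_host hs (T := N₀ + T) (hk _ (by omega)).mem
  obtain ⟨ρ, hρ, hlim⟩ := exists_limit_chain
    (E := fun t => TreeEdge A (s t) (w t) (s (t + 1)) (z t)) fun T t ht => hp T t (by omega)
  refine ⟨ρ, ⟨?_, fun t => (hρ t).mem_delta⟩, ?_⟩
  · obtain ⟨hidx, hmem⟩ := Slice.idx_mem (hρ 0).mem
    rw [hn, Icc_self, mem_singleton_iff] at hidx
    rwa [hidx, hS] at hmem
  · by_contra! hnot
    obtain ⟨N₁, hF⟩ := hnot
    obtain ⟨T, hT, hagree⟩ := frequently_atTop.1 (hlim (max N₀ N₁)) (max N₀ N₁)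
    have hhost := idx_eq_host_of_avoids hs (fun t ht => hk t (le_of_max_le_left ht)) hρ
      (fun t ht => hF t (le_of_max_le_right ht)) (by omega) hagree (hpT T) (hp T)
    obtain ⟨t, ht, htg⟩ := frequently_atTop.1 hgreen (N₀ + T)
    exact (hρ t).notMem_greenSet (hs t) (hk t (by omega)).mem.2 (hF _ (by omega)) (hhost t ht) htg

end Runs

/-! ### Completeness -/

/-- The indices `i ≥ a` such that none of the sets `S a, …, S i` carries a rank below `k`. It is
used for the index `a` of the set followed by an accepting run. -/
def Slice.window (s : Slice Q) (k a : ℕ) : Set ℕ :=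
  {i ∈ Icc a s.n | ∀ r ∈ Ico 1 k, s.host r ∉ Icc a i}

theorem Slice.rk_mem_of_mem_window {k i : ℕ} (hv : s.Valid) (hq : q ∈ s.states)
    (hi : i ∈ s.window k (s.idx q)) : s.rk i ∈ Icc k s.n := by
  obtain ⟨⟨hai, hin⟩, hsep⟩ := hi
  have hi : i ∈ Icc 1 s.n := ⟨(Slice.idx_mem hq).1.1.trans hai, hin⟩
  have hrk := Slice.rk_mem hv hi
  refine ⟨not_lt.1 fun hlt => hsep (s.rk i) ⟨hrk.1, hlt⟩ ?_, hrk.2⟩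
  rw [Slice.host_rk hv hi]
  exact ⟨hai, le_rfl⟩

namespace BlockStep

variable {s' : Slice Q} {z : ℕ → ℕ} {d k r i j : ℕ}

theorem exists_inBlock_idx (h : BlockStep A s x s' z d) (hq : q ∈ s.states)
    (hd : q' ∈ A.delta q x) :
    q' ∈ s'.states ∧ ∃ y, InBlock z s'.n y (s'.idx q') ∧ y ≤ 2 * s.idx q ∧
      (q' ∈ A.F → y < 2 * s.idx q) := by
  obtain ⟨hidx, hmem⟩ := Slice.idx_mem hq
  obtain ⟨y, ⟨hy1, hyi⟩, hy⟩ := exists_mem_hatS h.valid hidx hmem hd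
  obtain ⟨j, hj⟩ := h.exists_block y ⟨hy1, by have := hidx.2; omega⟩ ⟨q', hy⟩
  have hS : q' ∈ s'.S j := by
    rw [h.S_eq j hj.1]
    exact mem_biUnion hj.2 hy
  rw [Slice.idx_eq h.valid' hj.1 hS]
  refine ⟨mem_biUnion hj.1 hS, y, hj, hyi, fun hF => ?_⟩
  have hodd := (mem_hatS_iff.1 hy).2.1 hF
  omega

theorem lt_host_of_inBlock (h : BlockStep A s x s' z d) (hr : r ∈ Icc 1 s.n) (hrd : r < d)
    (hy : InBlock z s'.n y j) (hlt : y < 2 * s.host r) : j < s'.host r := by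
  have hhost := (h.tildeRk_host (h.rankPersists_of_lt hr hrd)).1
  rw [← h.start_host hr hrd] at hlt
  by_contra! hle
  have := h.strictMonoOn.monotoneOn ⟨hhost.1, hhost.2.trans (Nat.le_succ _)⟩
    ⟨hy.1.1, hy.1.2.trans (Nat.le_succ _)⟩ hle
  exact hlt.not_ge (this.trans hy.2.1)

theorem exists_mem_window (h : BlockStep A s x s' z d) (hq : q ∈ s.states)
    (hd : q' ∈ A.delta q x) (hkd : k ≤ d) (hkn : k ≤ s.n + 1)
    (hright : ∀ r ∈ Ico 1 k, s.host r < s.idx q → s'.host r < s'.idx q')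
    (hi : i ∈ s.window k (s.idx q)) :
    ∃ i' ∈ s'.window k (s'.idx q'), s'.rk i' ≤ s.rk i ∧
      (k ∈ redSet s s'.n z → s'.rk i' < s.rk i) := by
  obtain ⟨hq', y, hy, hyle, -⟩ := h.exists_inBlock_idx hq hd
  have hin : s.rk i ≤ s.n := (Slice.rk_mem_of_mem_window h.valid hq hi).2
  obtain ⟨⟨hai, hi_le⟩, hsep⟩ := hi
  obtain ⟨j, hj⟩ := exists_inBlock hy.1 (y := 2 * i)
    ⟨hy.2.1.trans (by omega), by rw [h.apply_last]; omega⟩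
  have hj_window : j ∈ s'.window k (s'.idx q') := by
    refine ⟨⟨h.le_of_inBlock hy hj (by omega), hj.1.2⟩, fun r hr ⟨har, hrj⟩ => ?_⟩
    have hrn : r ∈ Icc 1 s.n := ⟨hr.1, by have := hr.2; omega⟩
    have hri : s.host r ≤ i := by
      by_contra! hlt
      exact hrj.not_gt (h.lt_host_of_inBlock hrn (hr.2.trans_le hkd) hj (by omega))
    have hra : s.host r < s.idx q := not_le.1 fun hle => hsep r hr ⟨hle, hri⟩
    exact har.not_gt (hright r hr hra)
  have htilde : tildeRk s z j ≤ s.rk i :=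
    (tildeRk_le hj.2).trans_eq (Slice.hatRk_two_mul s i)
  have hrk : s'.rk j ≤ tildeRk s z j := h.rk_le_tildeRk hj.1 (htilde.trans hin)
  refine ⟨j, hj_window, hrk.trans htilde, fun hred => lt_of_lt_of_le ?_ htilde⟩
  have hk : k ≤ tildeRk s z j := (Slice.rk_mem_of_mem_window h.valid' hq' hj_window).1.trans hrk
  exact h.rk_lt_tildeRk hj.1 (htilde.trans hin) hred
    (hk.lt_of_ne fun heq => hred.2 ⟨j, hj.1, heq.symm⟩)

end BlockStep

section Runs

variable {s : ℕ → Slice Q} {w : ℕ → Alp} {z : ℕ → ℕ → ℕ} {d : ℕ → ℕ} {ρ : ℕ → Q} {k r : ℕ}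

theorem eventually_le_n_add_one
    (hs : ∀ t, BlockStep A (s t) (w t) (s (t + 1)) (z t) (d t)) (hn : ∀ t, 1 ≤ (s t).n)
    (hd : ∀ᶠ t in atTop, k ≤ d t) : ∀ᶠ t in atTop, k ≤ (s t).n + 1 := by
  have hgrow : ∀ t r, r ≤ (s t).n + 1 → r < d t → r ≤ (s (t + 1)).n := fun t r hrn hrd =>
    (hs t).le_n (hn t) hrn hrd.le ((hs t).not_red r hrd)
  refine eventually_of_frequently_of_step (fun hsmall => ?_) (hd.mono fun t hkd hkn => ?_)
  · obtain ⟨T, hT⟩ := eventually_atTop.1 (hd.and hsmall)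
    have hlarge : ∀ i, i ≤ (s (T + i)).n := fun i => by
      induction i with
      | zero => exact Nat.zero_le _
      | succ i ih =>
        obtain ⟨hkd, hlt⟩ := hT (T + i) (Nat.le_add_right T i)
        have := hgrow (T + i) _ le_rfl (by omega)
        exact (Nat.succ_le_succ ih).trans this
    exact (hT (T + k) (Nat.le_add_right T k)).2 ((hlarge k).trans (Nat.le_succ _))
  · have := hgrow t (k - 1)
    omega

theorem eventually_lt_host_or_eventually_host_lt
    (hs : ∀ t, BlockStep A (s t) (w t) (s (t + 1)) (z t) (d t))
    (hr : ∀ᶠ t in atTop, r ∈ Icc 1 (s t).n ∧ r < d t) (hmem : ∀ t, ρ t ∈ (s t).states)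
    (hρ : ∀ t, ρ (t + 1) ∈ A.delta (ρ t) (w t)) (hF : ∃ᶠ t in atTop, ρ (t + 1) ∈ A.F) :
    (∀ᶠ t in atTop, (s t).idx (ρ t) < (s t).host r) ∨
      ∀ᶠ t in atTop, (s t).host r < (s t).idx (ρ t) := by
  by_cases hlt : ∃ᶠ t in atTop, (s t).idx (ρ t) < (s t).host r
  · refine .inl (eventually_of_frequently_of_step hlt (hr.mono fun t ⟨hrn, hrd⟩ ht => ?_))
    obtain ⟨-, y, hy, hyle, -⟩ := (hs t).exists_inBlock_idx (hmem t) (hρ t)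
    exact (hs t).lt_host_of_inBlock hrn hrd hy (by omega)
  by_cases hle : ∃ᶠ t in atTop, (s t).idx (ρ t) ≤ (s t).host r
  · have hstay := eventually_of_frequently_of_step hle (hr.mono fun t ⟨hrn, hrd⟩ ht => by
      obtain ⟨-, y, hy, hyle, -⟩ := (hs t).exists_inBlock_idx (hmem t) (hρ t)
      exact (hs t).le_of_inBlock hy
        ((hs t).inBlock_host ((hs t).rankPersists_of_lt hrn hrd)) (by omega))
    refine absurd (Tendsto.frequently (tendsto_add_atTop_nat 1) <|
      (hF.and_eventually (hr.and hstay)).mono ?_) hlt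
    rintro t ⟨htF, ⟨hrn, hrd⟩, ht⟩
    obtain ⟨-, y, hy, -, hyF⟩ := (hs t).exists_inBlock_idx (hmem t) (hρ t)
    exact (hs t).lt_host_of_inBlock hrn hrd hy (by have := hyF htF; omega)
  · exact .inr (by simpa only [not_frequently, not_le] using hle)

theorem eventually_forall_ne_host
    (hs : ∀ t, BlockStep A (s t) (w t) (s (t + 1)) (z t) (d t))
    (hd : ∀ᶠ t in atTop, k ≤ d t) (hkn : ∀ᶠ t in atTop, k ≤ (s t).n + 1)
    (hmem : ∀ t, ρ t ∈ (s t).states) (hρ : ∀ t, ρ (t + 1) ∈ A.delta (ρ t) (w t))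
    (hF : ∃ᶠ t in atTop, ρ (t + 1) ∈ A.F) :
    ∀ᶠ t in atTop, ∀ r ∈ Ico 1 k, (s t).host r ≠ (s t).idx (ρ t) ∧
      ((s t).host r < (s t).idx (ρ t) → (s (t + 1)).host r < (s (t + 1)).idx (ρ (t + 1))) := by
  refine (eventually_all_finite (finite_Ico 1 k)).2 fun r hr => ?_
  have hrn : ∀ᶠ t in atTop, r ∈ Icc 1 (s t).n ∧ r < d t := by
    filter_upwards [hd, hkn] with t hkd hkn
    exact ⟨⟨hr.1, Nat.lt_succ_iff.1 (hr.2.trans_le hkn)⟩, hr.2.trans_le hkd⟩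
  rcases eventually_lt_host_or_eventually_host_lt hs hrn hmem hρ hF with hleft | hright
  · filter_upwards [hleft] with t ht
    exact ⟨ht.ne', fun hlt => absurd hlt ht.not_gt⟩
  · filter_upwards [hright, (tendsto_add_atTop_nat 1).eventually hright] with t ht ht'
    exact ⟨ht.ne, fun _ => ht'⟩

theorem mem_states_of_isRun
    (hs : ∀ t, BlockStep A (s t) (w t) (s (t + 1)) (z t) (d t))
    (hn : (s 0).n = 1) (hS : (s 0).S 1 = A.Q0) (hρ : A.IsRun w ρ) (t : ℕ) :
    ρ t ∈ (s t).states := by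
  induction t with
  | zero => exact mem_biUnion (show 1 ∈ Icc 1 (s 0).n by simp [hn]) (hS ▸ hρ.1)
  | succ t ih => exact ((hs t).exists_inBlock_idx ih (hρ.2 t)).1

theorem eventually_notMem_redSet_of_accepts [Fintype Q]
    (hs : ∀ t, BlockStep A (s t) (w t) (s (t + 1)) (z t) (d t))
    (hn : (s 0).n = 1) (hS : (s 0).S 1 = A.Q0) (hd : ∀ᶠ t in atTop, k ≤ d t)
    (hacc : A.Accepts w) :
    k ≤ Fintype.card Q ∧ ∀ᶠ t in atTop, k ∉ redSet (s t) (s (t + 1)).n (z t) := by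
  obtain ⟨ρ, hρ, hF⟩ := hacc
  have hmem := mem_states_of_isRun hs hn hS hρ
  have hF' : ∃ᶠ t in atTop, ρ (t + 1) ∈ A.F := frequently_atTop.2 fun N => by
    obtain ⟨_ | t, ht, htF⟩ := hF (N + 1)
    · omega
    · exact ⟨t, by omega, htF⟩
  have hkn := eventually_le_n_add_one hs
    (fun t => have h := (Slice.idx_mem (hmem t)).1; h.1.trans h.2) hd
  have hhost := eventually_forall_ne_host hs hd hkn hmem hρ.2 hF'
  have hwindow : ∀ᶠ t in atTop, (s t).idx (ρ t) ∈ (s t).window k ((s t).idx (ρ t)) := by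
    filter_upwards [hhost] with t ht
    refine ⟨⟨le_rfl, (Slice.idx_mem (hmem t)).1.2⟩, fun r hr hmem_r => (ht r hr).1 ?_⟩
    rwa [Icc_self, mem_singleton_iff] at hmem_r
  refine ⟨?_, eventually_not_of_descent (W := fun t => (s t).window k ((s t).idx (ρ t)))
    (f := fun t => (s t).rk) ?_ (hwindow.mono fun t ht => ⟨_, ht⟩).frequently⟩
  · obtain ⟨t, ht⟩ := hwindow.exists
    have hrk := Slice.rk_mem_of_mem_window (hs t).valid (hmem t) ht
    exact (hrk.1.trans hrk.2).trans (Slice.n_le_card (hs t).valid)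
  · filter_upwards [hd, hkn, hhost] with t hkd hkn ht i hi
    exact (hs t).exists_mem_window (hmem t) (hρ.2 t) hkd hkn (fun r hr => (ht r hr).2) hi

end Runs

/-! ### The parity condition -/

namespace TDPA

theorem accepts_iff {P : Type*} {B : TDPA P Alp} {w : ℕ → Alp} :
    B.Accepts w ↔ ∃ m, Even m ∧ (∃ᶠ t in atTop, B.c (B.run w t) (w t) = m) ∧
      ∀ᶠ t in atTop, m ≤ B.c (B.run w t) (w t) := by
  constructor
  · rintro ⟨m, hm, hmin, heven⟩
    have hm : ∃ᶠ t in atTop, B.c (B.run w t) (w t) = m := frequently_atTop.2 hm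
    obtain ⟨m', hm', hge⟩ := exists_frequently_eq_and_eventually_ge (hm.mono fun _ => le_of_eq)
    exact ⟨m, heven, hm, hge.mono fun _ => (hmin m' (frequently_atTop.1 hm')).trans⟩
  · rintro ⟨m, heven, hm, hge⟩
    refine ⟨m, frequently_atTop.1 hm, fun m' hm' => ?_, heven⟩
    obtain ⟨t, rfl, ht⟩ := ((frequently_atTop.2 hm').and_eventually hge).exists
    exact ht

theorem reachable_run {P : Type*} (B : TDPA P Alp) (w : ℕ → Alp) (t : ℕ) :
    B.Reachable (B.run w t) := by
  induction t with
  | zero => exact ⟨[], rfl⟩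
  | succ t ih =>
    obtain ⟨l, hl⟩ := ih
    exact ⟨l ++ [w t], by rw [List.foldl_append, hl, List.foldl_cons, List.foldl_nil, run]⟩

end TDPA

theorem ObtainedUnified.exists_priorityStep [Fintype Q] {B : TDPA (Slice Q) Alp}
    (hB : ObtainedUnified A B) (hQ0 : A.Q0.Nonempty) (w : ℕ → Alp) (t : ℕ) :
    ∃ z d, PriorityStep A (B.run w t) (w t) (B.run w (t + 1)) z d (B.c (B.run w t) (w t)) := by
  obtain ⟨hn, hS, hrk, htrans⟩ := hB
  have hstep := fun t => htrans _ (B.reachable_run w t) (w t)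
  refine (hstep t).exists_priorityStep ?_
  induction t with
  | zero => exact Slice.valid_of_n_eq_one hn (hS ▸ hQ0) hrk
  | succ t ih =>
    obtain ⟨z, d, h⟩ := (hstep t).exists_priorityStep ih
    exact h.valid'

section Runs

variable [Fintype Q] {s : ℕ → Slice Q} {w : ℕ → Alp} {z : ℕ → ℕ → ℕ} {d c : ℕ → ℕ}

theorem accepts_of_even_priority {m : ℕ}
    (hs : ∀ t, PriorityStep A (s t) (w t) (s (t + 1)) (z t) (d t) (c t))
    (hn : (s 0).n = 1) (hS : (s 0).S 1 = A.Q0) (hm : Even m)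
    (hfreq : ∃ᶠ t in atTop, c t = m) (hge : ∀ᶠ t in atTop, m ≤ c t) : A.Accepts w := by
  obtain ⟨k, rfl⟩ := hm.exists_two_nsmul
  simp only [smul_eq_mul] at hfreq hge
  have hgreen : ∀ t, c t = 2 * k → k ∈ greenSet A (s t) (w t) (s (t + 1)).n (z t) := fun t ht =>
    (ht ▸ hs t).mem_greenSet
  obtain ⟨t, ht⟩ := hfreq.exists
  obtain ⟨-, y, hy, -, hyk⟩ := hgreen t ht
  have hk : 1 ≤ k := hyk ▸ (Slice.hatRk_mem (hs t).valid hy).1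
  exact accepts_of_frequently_green (fun t => (hs t).toBlockStep) hn hS hk
    (hge.mono fun t ht => (hs t).le_of_le_priority (by omega))
    (hge.mono fun t => (hs t).notMem_redSet) (hfreq.mono hgreen)

theorem even_priority_of_accepts {m : ℕ}
    (hs : ∀ t, PriorityStep A (s t) (w t) (s (t + 1)) (z t) (d t) (c t))
    (hn : (s 0).n = 1) (hS : (s 0).S 1 = A.Q0) (hacc : A.Accepts w)
    (hfreq : ∃ᶠ t in atTop, c t = m) (hge : ∀ᶠ t in atTop, m ≤ c t) : Even m := by
  by_contra hodd
  obtain ⟨k, rfl⟩ := Nat.not_even_iff_odd.1 hodd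
  obtain ⟨hcard, hred⟩ := eventually_notMem_redSet_of_accepts (fun t => (hs t).toBlockStep) hn hS
    (hge.mono fun t ht => (hs t).le_of_le_priority (k := k + 1) (by omega)) hacc
  obtain ⟨t, ht, htred⟩ := (hfreq.and_eventually hred).exists
  rcases (ht ▸ hs t).mem_redSet_or_card_lt with hmem | hlt
  · exact htred hmem
  · exact hlt.not_ge hcard

end Runs

theorem mullerSchupp_correct_general [Fintype Q] (A : NBA Q Alp) (hQ0 : A.Q0.Nonempty)
    (B : TDPA (Slice Q) Alp) (hB : ObtainedUnified A B) :
    {w : ℕ → Alp | B.Accepts w} = {w : ℕ → Alp | A.Accepts w} := by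
  ext w
  choose z d hs using hB.exists_priorityStep hQ0 w
  rw [mem_ofPred_eq, mem_ofPred_eq, TDPA.accepts_iff]
  constructor
  · rintro ⟨m, hm, hfreq, hge⟩
    exact accepts_of_even_priority hs hB.1 hB.2.1 hm hfreq hge
  · intro hacc
    obtain ⟨m, hfreq, hge⟩ := exists_frequently_eq_and_eventually_ge
      (Frequently.of_forall fun t => (hs t).priority_le)
    exact ⟨m, even_priority_of_accepts hs hB.1 hB.2.1 hacc hfreq hge, hfreq, hge⟩

end

/-- For an NBA `A` with nonempty initial set, any TDPA `B` obtained by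
the Muller-Schupp construction recognizes the same language: `L(B) = L(A)`. -/
theorem mullerSchupp_correct {Q Alp : Type} [Fintype Q] (A : NBA Q Alp)
    (hQ0 : A.Q0.Nonempty) (B : TDPA (Slice Q) Alp) (hB : ObtainedMS A B) :
    {w : ℕ → Alp | B.Accepts w} = {w : ℕ → Alp | A.Accepts w} :=
  mullerSchupp_correct_general A hQ0 B ⟨hB.1, hB.2.1, hB.2.2.1, fun p hp x =>
    have ⟨nt, xs, h⟩ := hB.2.2.2 p hp x
    ⟨nt, xs, nt, id, h⟩⟩
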